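/- Let X be a Banach space, T > 0, and let Λ : L²(0,T;X) → L²(0,T;X) be an operator for which there exists a constant L > 0 such that ‖(Λη₁)(t) − (Λη₂)(t)‖_X ≤ L ∫₀ᵗ ‖η₁(s) − η₂(s)‖_X ds for all η₁, η₂ ∈ L²(0,T;X) and a.e. t ∈ (0,T). Then Λ satisfies the squared estimate ‖(Λη₁)(t) − (Λη₂)(t)‖²_X ≤ L²T ∫₀ᵗ ‖η₁(s) − η₂(s)‖²_X ds for a.e. t ∈ (0,T), and consequently Λ has a unique fixed point η* ∈ L²(0,T;X) with Λη* = η*. -/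

import Mathlib

open MeasureTheory Set

/-- The measure on the time interval `(0,T]`, used to model the Bochner space `L²(0,T;X)`
as `Lp X 2 (timeMeasure T)`. -/
noncomputable def timeMeasure (T : ℝ) : Measure ℝ := volume.restrict (Ioc 0 T)

lemma hd_norm_sq {X : Type*} [NormedAddCommGroup X] {μ : Measure ℝ}
    (η₁ η₂ : Lp X 2 μ) : ∫ s, ‖η₁ s - η₂ s‖ ^ 2 ∂μ = ‖η₁ - η₂‖ ^ 2 := by
  have hm : MemLp (η₁ - η₂ : Lp X 2 μ) 2 μ := Lp.memLp _
  have h1 : ∫ s, ‖η₁ s - η₂ s‖ ^ 2 ∂μ = ∫ s, ‖(η₁ - η₂ : Lp X 2 μ) s‖ ^ 2 ∂μ := by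
    apply integral_congr_ae
    filter_upwards [Lp.coeFn_sub η₁ η₂] with s hs
    rw [hs]; rfl
  rw [h1, Lp.norm_def, hm.eLpNorm_eq_integral_rpow_norm (by norm_num) (by norm_num)]
  have h0 : 0 ≤ ∫ s, ‖(η₁ - η₂ : Lp X 2 μ) s‖ ^ 2 ∂μ := integral_nonneg fun _ => by positivity
  rw [ENNReal.toReal_ofReal (by positivity)]
  simp only [ENNReal.toReal_ofNat, Real.rpow_ofNat]
  rw [← Real.rpow_natCast, ← Real.rpow_mul h0]
  norm_num

lemma hd_cs {f : ℝ → ℝ} {t : ℝ} (ht : 0 < t) (h1 : IntegrableOn f (Ioc 0 t))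
    (h2 : IntegrableOn (fun s => f s ^ 2) (Ioc 0 t)) :
    (∫ s in Ioc 0 t, f s) ^ 2 ≤ t * ∫ s in Ioc 0 t, f s ^ 2 := by
  set c := (∫ s in Ioc 0 t, f s) with hc
  have h0 : 0 ≤ ∫ s in Ioc 0 t, (f s ^ 2 - 2 * (c / t) * f s + (c / t) ^ 2) :=
    integral_nonneg fun s => by
      show 0 ≤ f s ^ 2 - 2 * (c / t) * f s + (c / t) ^ 2
      nlinarith [sq_nonneg (f s - c / t)]
  have h3 : IntegrableOn (fun s => 2 * (c / t) * f s) (Ioc 0 t) := h1.const_mul _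
  have h4 : IntegrableOn (fun _ => (c / t) ^ 2) (Ioc 0 t) := by simp
  have e : ∫ s in Ioc 0 t, (f s ^ 2 - 2 * (c / t) * f s + (c / t) ^ 2)
      = (∫ s in Ioc 0 t, f s ^ 2) - 2 * (c / t) * c + t * (c / t) ^ 2 := by
    have h6 : IntegrableOn (fun s => f s ^ 2 - 2 * (c / t) * f s) (Ioc 0 t) := h2.sub h3
    rw [integral_add h6 h4, integral_sub h2 h3, integral_const_mul, ← hc]
    simp [ht.le]
  rw [e] at h0
  have h5 : t * ((∫ s in Ioc 0 t, f s ^ 2) - 2 * (c / t) * c + t * (c / t) ^ 2)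
    = t * (∫ s in Ioc 0 t, f s ^ 2) - c ^ 2 := by field_simp; ring
  nlinarith [mul_nonneg ht.le h0]

lemma hd_memLp {X : Type*} [NormedAddCommGroup X] {μ : Measure ℝ}
    (η₁ η₂ : Lp X 2 μ) : MemLp (fun s => ‖η₁ s - η₂ s‖) 2 μ :=
  ((Lp.memLp η₁).sub (Lp.memLp η₂)).norm

lemma hd_int_sq {X : Type*} [NormedAddCommGroup X] {T t : ℝ} (htT : t ≤ T)
    (η₁ η₂ : Lp X 2 (timeMeasure T)) :
    IntegrableOn (fun s => ‖η₁ s - η₂ s‖ ^ 2) (Ioc 0 t) := by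
  have : IntegrableOn (fun s => ‖η₁ s - η₂ s‖ ^ 2) (Ioc 0 T) := (hd_memLp η₁ η₂).integrable_sq
  exact this.mono_set (Ioc_subset_Ioc_right htT)

lemma hd_int {X : Type*} [NormedAddCommGroup X] {T t : ℝ} (htT : t ≤ T)
    (η₁ η₂ : Lp X 2 (timeMeasure T)) :
    IntegrableOn (fun s => ‖η₁ s - η₂ s‖) (Ioc 0 t) := by
  haveI : IsFiniteMeasure (timeMeasure T) := by unfold timeMeasure; infer_instance
  have : IntegrableOn (fun s => ‖η₁ s - η₂ s‖) (Ioc 0 T) :=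
    (hd_memLp η₁ η₂).integrable (by norm_num)
  exact this.mono_set (Ioc_subset_Ioc_right htT)

lemma hd_ae_mem (T : ℝ) : ∀ᵐ t ∂(timeMeasure T), t ∈ Ioc 0 T :=
  ae_restrict_mem measurableSet_Ioc

lemma hd_sq {X : Type*} [NormedAddCommGroup X] {T L : ℝ}
    (Λ : Lp X 2 (timeMeasure T) → Lp X 2 (timeMeasure T))
    (hΛ : ∀ η₁ η₂ : Lp X 2 (timeMeasure T), ∀ᵐ t ∂(timeMeasure T),
      ‖Λ η₁ t - Λ η₂ t‖ ≤ L * ∫ s in Ioc (0:ℝ) t, ‖η₁ s - η₂ s‖)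
    (η₁ η₂ : Lp X 2 (timeMeasure T)) : ∀ᵐ t ∂(timeMeasure T),
      ‖Λ η₁ t - Λ η₂ t‖ ^ 2 ≤ L ^ 2 * T * ∫ s in Ioc (0:ℝ) t, ‖η₁ s - η₂ s‖ ^ 2 := by
  filter_upwards [hΛ η₁ η₂, hd_ae_mem T] with t h ht
  have hc := hd_cs ht.1 (hd_int ht.2 η₁ η₂) (hd_int_sq ht.2 η₁ η₂)
  have h0 : 0 ≤ ∫ s in Ioc 0 t, ‖η₁ s - η₂ s‖ ^ 2 := integral_nonneg fun _ => by positivity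
  calc _ ≤ (L * ∫ s in Ioc (0:ℝ) t, ‖η₁ s - η₂ s‖) ^ 2 := by gcongr
    _ = L ^ 2 * (∫ s in Ioc (0:ℝ) t, ‖η₁ s - η₂ s‖) ^ 2 := by ring
    _ ≤ L ^ 2 * (T * ∫ s in Ioc 0 t, ‖η₁ s - η₂ s‖ ^ 2) := by
        gcongr
        exact hc.trans (by gcongr; exact ht.2)
    _ = _ := by ring

lemma hd_iter {X : Type*} [NormedAddCommGroup X] {T C : ℝ} (hC : 0 ≤ C)
    (Λ : Lp X 2 (timeMeasure T) → Lp X 2 (timeMeasure T))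
    (hΛ : ∀ η₁ η₂ : Lp X 2 (timeMeasure T), ∀ᵐ t ∂(timeMeasure T),
      ‖Λ η₁ t - Λ η₂ t‖ ^ 2 ≤ C * ∫ s in Ioc (0:ℝ) t, ‖η₁ s - η₂ s‖ ^ 2)
    (η₁ η₂ : Lp X 2 (timeMeasure T)) (n : ℕ) : ∀ᵐ t ∂(timeMeasure T),
      ‖Λ^[n+1] η₁ t - Λ^[n+1] η₂ t‖ ^ 2
        ≤ C ^ (n+1) * (t ^ n / n.factorial) * ‖η₁ - η₂‖ ^ 2 := by
  induction n with
  | zero =>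
    filter_upwards [hΛ η₁ η₂, hd_ae_mem T] with t h ht
    simp only [zero_add, Function.iterate_one, pow_one, pow_zero, Nat.factorial_zero,
      Nat.cast_one, div_one, mul_one]
    refine h.trans ?_
    gcongr
    rw [← hd_norm_sq]
    exact setIntegral_mono_set (hd_int_sq le_rfl η₁ η₂)
      (Filter.Eventually.of_forall fun _ => by positivity)
      (Ioc_subset_Ioc_right ht.2).eventuallyLE
  | succ n ih =>
    filter_upwards [hΛ (Λ^[n+1] η₁) (Λ^[n+1] η₂), hd_ae_mem T] with t h ht
    rw [Function.iterate_succ_apply' Λ (n+1), Function.iterate_succ_apply' Λ (n+1)]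
    refine h.trans ?_
    have ih' : ∀ᵐ s ∂(volume.restrict (Ioc 0 t)), ‖Λ^[n+1] η₁ s - Λ^[n+1] η₂ s‖ ^ 2
        ≤ C ^ (n+1) * (s ^ n / n.factorial) * ‖η₁ - η₂‖ ^ 2 :=
      ae_mono (Measure.restrict_mono (Ioc_subset_Ioc_right ht.2) le_rfl) ih
    have hI : ∫ s in Ioc 0 t, ‖Λ^[n+1] η₁ s - Λ^[n+1] η₂ s‖ ^ 2
        ≤ ∫ s in Ioc 0 t, C ^ (n+1) * (s ^ n / n.factorial) * ‖η₁ - η₂‖ ^ 2 := by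
      refine integral_mono_ae (hd_int_sq ht.2 _ _) ?_ ih'
      exact (Continuous.integrableOn_Ioc (by fun_prop))
    have hE : ∫ s in Ioc 0 t, C ^ (n+1) * (s ^ n / n.factorial) * ‖η₁ - η₂‖ ^ 2
        = C ^ (n+1) * (t ^ (n+1) / (n+1).factorial) * ‖η₁ - η₂‖ ^ 2 := by
      rw [← intervalIntegral.integral_of_le ht.1.le, intervalIntegral.integral_mul_const,
        intervalIntegral.integral_const_mul, intervalIntegral.integral_div, integral_pow]
      rw [Nat.factorial_succ]
      push_cast
      simp
      left; left
      field_simp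
    calc _ ≤ C * (C ^ (n+1) * (t ^ (n+1) / (n+1).factorial) * ‖η₁ - η₂‖ ^ 2) := by
          rw [← hE]; gcongr
      _ = _ := by ring

lemma hd_norm_iter {X : Type*} [NormedAddCommGroup X] {T C : ℝ} (hT : 0 < T) (hC : 0 ≤ C)
    (Λ : Lp X 2 (timeMeasure T) → Lp X 2 (timeMeasure T))
    (hΛ : ∀ η₁ η₂ : Lp X 2 (timeMeasure T), ∀ᵐ t ∂(timeMeasure T),
      ‖Λ η₁ t - Λ η₂ t‖ ^ 2 ≤ C * ∫ s in Ioc (0:ℝ) t, ‖η₁ s - η₂ s‖ ^ 2)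
    (η₁ η₂ : Lp X 2 (timeMeasure T)) (n : ℕ) :
      ‖Λ^[n+1] η₁ - Λ^[n+1] η₂‖ ^ 2
        ≤ T * C * ((C * T) ^ n / n.factorial) * ‖η₁ - η₂‖ ^ 2 := by
  rw [← hd_norm_sq (Λ^[n+1] η₁)]
  have : ∫ s in Ioc 0 T, ‖Λ^[n+1] η₁ s - Λ^[n+1] η₂ s‖ ^ 2
      ≤ ∫ s in Ioc 0 T, C ^ (n+1) * (T ^ n / n.factorial) * ‖η₁ - η₂‖ ^ 2 := by
    refine integral_mono_ae (hd_int_sq le_rfl _ _) (integrable_const _) ?_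
    filter_upwards [hd_iter hC Λ hΛ η₁ η₂ n, hd_ae_mem T] with t h ht
    refine h.trans ?_
    have := ht.1.le
    have := ht.2
    gcongr
  refine this.trans (le_of_eq ?_)
  simp [hT.le]
  ring

/-- A history-dependent operator `Λ : L²(0,T;X) → L²(0,T;X)` (with constant
`L > 0`) satisfies the squared estimate
`‖(Λη₁)(t) − (Λη₂)(t)‖² ≤ L²T ∫₀ᵗ ‖η₁(s) − η₂(s)‖² ds` for a.e. `t ∈ (0,T)`,
and consequently has a unique fixed point in `L²(0,T;X)`. -/
theorem history_dependent_fixed_point {X : Type*} [NormedAddCommGroup X] [NormedSpace ℝ X]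
    [CompleteSpace X] {T : ℝ} (hT : 0 < T) {L : ℝ} (hL : 0 < L)
    (Λ : Lp X 2 (timeMeasure T) → Lp X 2 (timeMeasure T))
    (hΛ : ∀ η₁ η₂ : Lp X 2 (timeMeasure T), ∀ᵐ t ∂(timeMeasure T),
      ‖Λ η₁ t - Λ η₂ t‖ ≤ L * ∫ s in Ioc (0:ℝ) t, ‖η₁ s - η₂ s‖) :
    (∀ η₁ η₂ : Lp X 2 (timeMeasure T), ∀ᵐ t ∂(timeMeasure T),
      ‖Λ η₁ t - Λ η₂ t‖ ^ 2 ≤ L ^ 2 * T * ∫ s in Ioc (0:ℝ) t, ‖η₁ s - η₂ s‖ ^ 2) ∧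
    ∃! η : Lp X 2 (timeMeasure T), Λ η = η := by
  have hsq := hd_sq Λ hΛ
  refine ⟨hsq, ?_⟩
  have hC : 0 ≤ L ^ 2 * T := by positivity
  have hlim : Filter.Tendsto (fun n : ℕ => T * (L ^ 2 * T) *
      ((L ^ 2 * T * T) ^ n / n.factorial)) Filter.atTop (nhds 0) := by
    simpa using (FloorSemiring.tendsto_pow_div_factorial_atTop (L ^ 2 * T * T)).const_mul
      (T * (L ^ 2 * T))
  obtain ⟨n, hn⟩ := (hlim.eventually (gt_mem_nhds (show (0:ℝ) < 1 / 4 by norm_num))).exists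
  have hcon : ContractingWith (1 / 2) (Λ^[n+1]) := by
    refine ⟨by rw [← NNReal.coe_lt_coe]; norm_num, LipschitzWith.of_dist_le_mul fun η₁ η₂ => ?_⟩
    rw [dist_eq_norm, dist_eq_norm]
    have h := hd_norm_iter hT hC Λ hsq η₁ η₂ n
    refine (pow_le_pow_iff_left₀ (by positivity) (by positivity) two_ne_zero).1 (h.trans ?_)
    calc _ ≤ 1 / 4 * ‖η₁ - η₂‖ ^ 2 := by gcongr
      _ = _ := by push_cast; ring
  haveI : Fact ((1 : ENNReal) ≤ 2) := ⟨by norm_num⟩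
  have hfix := hcon.isFixedPt_fixedPoint_iterate
  refine ⟨_, hfix, fun y hy => hcon.fixedPoint_unique ?_⟩
  exact Function.IsFixedPt.iterate hy (n+1)
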